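/- Run expansion relates Memo to Match (Lemma 6): For every NFA A = (Q, q0, F, T) without ε-loops, every input string w over Σ, and every position i ∈ {0, …, |w|}, if s is the run of Match_{A,w}(q0, i) and s' is the run of Memo^{M0}_{A,w}(q0, i), then s = sub*(s'). -/

import Mathlib

namespace RegexMemo

/-! ## Generic runs, `φ`, `sub`, `sub*` -/

variable {α : Type}

/-- `φ_s(ℓ, n)`: the index of the result value of the call at index `ℓ`. -/
def phiAux (isRet : α → Bool) (s : List α) (ℓ n : ℕ) : Option ℕ :=
  match h : s[ℓ]? with
  | none => none
  | some e =>
    if isRet e then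
      if n ≤ 1 then some ℓ
      else phiAux isRet s (ℓ + 1) (n - 1)
    else phiAux isRet s (ℓ + 1) (n + 1)
termination_by s.length - ℓ
decreasing_by
  all_goals
    have hl : ℓ < s.length := by
      by_contra hc
      have : s[ℓ]? = none := List.getElem?_eq_none (by omega)
      simp [this] at h
    omega

/-- `φ_s(ℓ) = φ_s(ℓ, 0)`. -/
def phi (isRet : α → Bool) (s : List α) (ℓ : ℕ) : Option ℕ := phiAux isRet s ℓ 0

/-- `sub(s, ℓ)`: replace the memoization-table invocation at index `ℓ` (an element
`M(q,i)` together with its immediately following result) by `C(q,i)` followed by the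
subsequence `s[ℓ'+1] … s[φ_s(ℓ')]`, where `ℓ'` is the first index with `s[ℓ'] = C(q,i)`.
Here `m2c` maps a memoization element `M(q,i)` to the corresponding call element `C(q,i)`
(and everything else to `none`), and `isRet` recognizes result elements. -/
def subExpand [DecidableEq α] (m2c : α → Option α) (isRet : α → Bool)
    (s : List α) (ℓ : ℕ) : Option (List α) :=
  match s[ℓ]? with
  | some e =>
    match m2c e with
    | some c =>
      match s.findIdx? (· == c) with
      | some ℓ' =>
        match phi isRet s ℓ' with
        | some m =>
          some (s.take ℓ ++ [c] ++ ((s.drop (ℓ' + 1)).take (m - ℓ')) ++ s.drop (ℓ + 2))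
        | none => none
      | none => none
    | none => none
  | none => none

/-- `sub*`: repeatedly locate the first memoization element and expand it,
until no memoization element remains. `SubStar m2c isRet s t` means `sub*(s) = t`. -/
inductive SubStar [DecidableEq α] (m2c : α → Option α) (isRet : α → Bool) :
    List α → List α → Prop where
  | done {s : List α} : s.findIdx? (fun e => (m2c e).isSome) = none →
      SubStar m2c isRet s s
  | step {s s' t : List α} {ℓ : ℕ} :
      s.findIdx? (fun e => (m2c e).isSome) = some ℓ →
      subExpand m2c isRet s ℓ = some s' →
      SubStar m2c isRet s' t →
      SubStar m2c isRet s t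

/-- The number of (recursive) calls recorded in a run: the number of `C`/`M` elements. -/
def callCount (isCall : α → Bool) (s : List α) : ℕ := (s.filter isCall).length

variable {Sigma S : Type}

/-- Results of backtracking matching: `SuccessAt i'` or `Failure`. -/
inductive Result : Type where
  | successAt : ℕ → Result
  | failure : Result
deriving DecidableEq

/-! ## Plain NFAs -/

/-- Transitions of a plain NFA. -/
inductive Trans (Sigma S : Type) : Type where
  | eps : S → Trans Sigma S
  | branch : S → S → Trans Sigma S
  | char : Sigma → S → Trans Sigma S

/-- A (plain) NFA over the alphabet `Sigma` with (finite) state type `S`: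
an initial state, a set of accepting states, and a transition function
(whose value is only relevant on non-accepting states). -/
structure NFA (Sigma S : Type) where
  q0 : S
  F : Set S
  T : S → Trans Sigma S

/-- One ε-step: an `Eps` or `Branch` transition of a non-accepting state. -/
def NFA.epsStep (A : NFA Sigma S) (q q' : S) : Prop :=
  q ∉ A.F ∧ (A.T q = Trans.eps q' ∨ (∃ q'', A.T q = Trans.branch q' q'') ∨
    (∃ q'', A.T q = Trans.branch q'' q'))

/-- The NFA has no ε-loops. -/
def NFA.NoEpsLoops (A : NFA Sigma S) : Prop :=
  ∀ q : S, ¬ Relation.TransGen A.epsStep q q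

open Classical in
/-- The in-degree `#in(q)` of a state of a plain NFA. -/
noncomputable def NFA.inDeg [Fintype S] (A : NFA Sigma S) (q : S) : ℕ :=
  (Finset.univ.filter fun q' : S => q' ∉ A.F ∧ A.T q' = Trans.eps q).card +
  (Finset.univ.filter fun q' : S => q' ∉ A.F ∧ ∃ σ, A.T q' = Trans.char σ q).card +
  (Finset.univ.filter fun q' : S => q' ∉ A.F ∧ ∃ q'', A.T q' = Trans.branch q q'').card +
  (Finset.univ.filter fun q' : S => q' ∉ A.F ∧ ∃ q'', A.T q' = Trans.branch q'' q).card +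
  (if q = A.q0 then 1 else 0)

/-- The maximal in-degree `#in(A)` of a plain NFA. -/
noncomputable def NFA.inDegMax [Fintype S] (A : NFA Sigma S) : ℕ :=
  Finset.univ.sup fun q : S => A.inDeg q

/-- Elements of runs of `Match`/`Memo`: calls `C(q,i)`, memoization-table invocations
`M(q,i)`, and results `S(i')` and `F`. -/
inductive RunElem (S : Type) : Type where
  | call : S → ℕ → RunElem S
  | memo : S → ℕ → RunElem S
  | succ : ℕ → RunElem S
  | fail : RunElem S
deriving DecidableEq

/-- The run element recording the return of a result. -/
def Result.elem {S : Type} : Result → RunElem S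
  | .successAt i => .succ i
  | .failure => .fail

def RunElem.isRet : RunElem S → Bool
  | .succ _ => true
  | .fail => true
  | _ => false

def RunElem.isCall : RunElem S → Bool
  | .call _ _ => true
  | .memo _ _ => true
  | _ => false

/-- `M(q,i) ↦ C(q,i)`. -/
def memoToCall : RunElem S → Option (RunElem S)
  | .memo q i => some (.call q i)
  | _ => none

/-- Big-step semantics (together with the produced run) of the backtracking
matching algorithm `Match` for plain NFAs:
`MatchRun A w q i r s` means the call `Match_{A,w}(q, i)` terminates with
result `r` and produces the run `s`. -/
inductive MatchRun (A : NFA Sigma S) (w : List Sigma) :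
    S → ℕ → Result → List (RunElem S) → Prop where
  | accept {q : S} {i : ℕ} : q ∈ A.F →
      MatchRun A w q i (.successAt i) [.call q i, .succ i]
  | eps {q q' : S} {i : ℕ} {r : Result} {s : List (RunElem S)} :
      q ∉ A.F → A.T q = Trans.eps q' →
      MatchRun A w q' i r s →
      MatchRun A w q i r (.call q i :: s ++ [r.elem])
  | branchSucc {q q' q'' : S} {i i' : ℕ} {s : List (RunElem S)} :
      q ∉ A.F → A.T q = Trans.branch q' q'' →
      MatchRun A w q' i (.successAt i') s →
      MatchRun A w q i (.successAt i') (.call q i :: s ++ [RunElem.succ i'])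
  | branchFail {q q' q'' : S} {i : ℕ} {r : Result} {s s' : List (RunElem S)} :
      q ∉ A.F → A.T q = Trans.branch q' q'' →
      MatchRun A w q' i .failure s →
      MatchRun A w q'' i r s' →
      MatchRun A w q i r (.call q i :: s ++ s' ++ [r.elem])
  | charSucc {q q' : S} {σ : Sigma} {i : ℕ} {r : Result} {s : List (RunElem S)} :
      q ∉ A.F → A.T q = Trans.char σ q' →
      w[i]? = some σ →
      MatchRun A w q' (i + 1) r s →
      MatchRun A w q i r (.call q i :: s ++ [r.elem])
  | charFail {q q' : S} {σ : Sigma} {i : ℕ} :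
      q ∉ A.F → A.T q = Trans.char σ q' →
      w[i]? ≠ some σ →
      MatchRun A w q i .failure [.call q i, .fail]

/-- Record `M(q,i) := Failure` in the memoization table if the result is a failure. -/
def recFail [DecidableEq S] (M : S × ℕ → Bool) (q : S) (i : ℕ) : Result → (S × ℕ → Bool)
  | .failure => fun p => if p = (q, i) then true else M p
  | _ => M

/-- Big-step semantics (with resulting memoization table and produced run) of the
memoized backtracking matching algorithm `Memo` for plain NFAs:
`MemoRun A w q i M M' r s` means the call `Memo^M_{A,w}(q, i)` terminates with result
`r`, final memoization table `M'` (where `M p = true` means `Failure` is recorded at the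
key `p`), and produces the run `s`. -/
inductive MemoRun [DecidableEq S] (A : NFA Sigma S) (w : List Sigma) :
    S → ℕ → (S × ℕ → Bool) → (S × ℕ → Bool) → Result → List (RunElem S) → Prop where
  | memoHit {q : S} {i : ℕ} {M : S × ℕ → Bool} : M (q, i) = true →
      MemoRun A w q i M M .failure [.memo q i, .fail]
  | accept {q : S} {i : ℕ} {M : S × ℕ → Bool} : M (q, i) = false → q ∈ A.F →
      MemoRun A w q i M M (.successAt i) [.call q i, .succ i]
  | eps {q q' : S} {i : ℕ} {M M' : S × ℕ → Bool} {r : Result} {s : List (RunElem S)} :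
      M (q, i) = false → q ∉ A.F → A.T q = Trans.eps q' →
      MemoRun A w q' i M M' r s →
      MemoRun A w q i M (recFail M' q i r) r (.call q i :: s ++ [r.elem])
  | branchSucc {q q' q'' : S} {i i' : ℕ} {M M' : S × ℕ → Bool} {s : List (RunElem S)} :
      M (q, i) = false → q ∉ A.F → A.T q = Trans.branch q' q'' →
      MemoRun A w q' i M M' (.successAt i') s →
      MemoRun A w q i M M' (.successAt i') (.call q i :: s ++ [RunElem.succ i'])
  | branchFail {q q' q'' : S} {i : ℕ} {M M' M'' : S × ℕ → Bool} {r : Result}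
      {s s' : List (RunElem S)} :
      M (q, i) = false → q ∉ A.F → A.T q = Trans.branch q' q'' →
      MemoRun A w q' i M M' .failure s →
      MemoRun A w q'' i M' M'' r s' →
      MemoRun A w q i M (recFail M'' q i r) r (.call q i :: s ++ s' ++ [r.elem])
  | charSucc {q q' : S} {σ : Sigma} {i : ℕ} {M M' : S × ℕ → Bool} {r : Result}
      {s : List (RunElem S)} :
      M (q, i) = false → q ∉ A.F → A.T q = Trans.char σ q' →
      w[i]? = some σ →
      MemoRun A w q' (i + 1) M M' r s →
      MemoRun A w q i M (recFail M' q i r) r (.call q i :: s ++ [r.elem])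
  | charFail {q q' : S} {σ : Sigma} {i : ℕ} {M : S × ℕ → Bool} :
      M (q, i) = false → q ∉ A.F → A.T q = Trans.char σ q' →
      w[i]? ≠ some σ →
      MemoRun A w q i M (recFail M q i .failure) .failure [.call q i, .fail]

/-! ## NFAs with sub-automata -/

/-- Kind labels of sub-automaton transitions: positive/negative look-ahead/look-behind
and atomic grouping. -/
inductive Kind : Type where
  | pla | nla | plb | nlb | at
deriving DecidableEq

mutual
/-- An NFA with sub-automata `⟨Q, q0, F, T⟩`: a list of top-level states, an initial
state, accepting states, and a transition function (relevant on non-accepting top-level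
states) whose transitions may be labelled with further NFAs with sub-automata. -/
inductive SubNFA (Sigma S : Type) : Type where
  | mk : List S → S → List S → (S → SubTrans Sigma S) → SubNFA Sigma S

/-- Transitions of an NFA with sub-automata. -/
inductive SubTrans (Sigma S : Type) : Type where
  | eps : S → SubTrans Sigma S
  | branch : S → S → SubTrans Sigma S
  | char : Sigma → S → SubTrans Sigma S
  | sub : Kind → SubNFA Sigma S → S → SubTrans Sigma S
end

/-- Top-level states `Q`. -/
def SubNFA.Q : SubNFA Sigma S → List S
  | .mk Q _ _ _ => Q

/-- Initial state `q0`. -/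
def SubNFA.q0 : SubNFA Sigma S → S
  | .mk _ q0 _ _ => q0

/-- Accepting states `F`. -/
def SubNFA.F : SubNFA Sigma S → List S
  | .mk _ _ F _ => F

/-- Transition function `T`. -/
def SubNFA.T : SubNFA Sigma S → S → SubTrans Sigma S
  | .mk _ _ _ T => T

mutual
/-- All automata occurring within an NFA with sub-automata (including itself), each
together with its nesting depth of atomic grouping (the number of enclosing
`at`-sub-automaton boundaries). -/
def SubNFA.compsD : SubNFA Sigma S → List (SubNFA Sigma S × ℕ)
  | .mk Q q0 F T => (.mk Q q0 F T, 0) :: Q.flatMap (fun q => SubTrans.subCompsD (T q))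

def SubTrans.subCompsD : SubTrans Sigma S → List (SubNFA Sigma S × ℕ)
  | .sub k A' _ => (SubNFA.compsD A').map (fun p => (p.1, p.2 + (if k = Kind.at then 1 else 0)))
  | _ => []
end

/-- All automata occurring within `A` (including `A` itself). -/
def SubNFA.comps (A : SubNFA Sigma S) : List (SubNFA Sigma S) :=
  A.compsD.map Prod.fst

/-- The set (list) of all states `P` occurring within `A`. -/
def SubNFA.allStates (A : SubNFA Sigma S) : List S :=
  A.comps.flatMap SubNFA.Q

/-- The nesting depth of atomic grouping `ν_A(q)` of a state `q` of `A`. -/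
def SubNFA.nu [DecidableEq S] (A : SubNFA Sigma S) (q : S) : ℕ :=
  (A.compsD.map (fun p => if q ∈ p.1.Q then p.2 else 0)).sum

/-- The maximal nesting depth of atomic grouping `ν(A)`. -/
def SubNFA.nuMax [DecidableEq S] (A : SubNFA Sigma S) : ℕ :=
  (A.allStates.map A.nu).foldr max 0

/-- Local wellformedness of one automaton: the initial state is a top-level state,
accepting states are top-level states, and transitions of non-accepting top-level
states lead to top-level states. -/
def SubNFA.LocalOK (B : SubNFA Sigma S) : Prop :=
  B.q0 ∈ B.Q ∧ (∀ f ∈ B.F, f ∈ B.Q) ∧ ∀ q ∈ B.Q, q ∉ B.F →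
    match B.T q with
    | .eps q' => q' ∈ B.Q
    | .branch q' q'' => q' ∈ B.Q ∧ q'' ∈ B.Q
    | .char _ q' => q' ∈ B.Q
    | .sub _ _ q' => q' ∈ B.Q

/-- Wellformedness of an NFA with sub-automata: every component automaton is locally
wellformed, and all the state lists are disjoint and duplicate-free (so that `P` is
the disjoint union of the top-level state sets of all components). -/
def SubNFA.WF (A : SubNFA Sigma S) : Prop :=
  (∀ B ∈ A.comps, B.LocalOK) ∧ A.allStates.Nodup

/-- The kind labels of all sub-automaton transitions occurring in `A`. -/
def SubNFA.kinds [DecidableEq S] (A : SubNFA Sigma S) : List Kind :=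
  A.comps.flatMap fun B =>
    (B.Q.filter (fun q => decide (q ∉ B.F))).filterMap fun q =>
      match B.T q with
      | .sub k _ _ => some k
      | _ => none

/-- A la-NFA: all kind labels are look-around labels (for simplicity, only positive
look-ahead `pla` is treated). -/
def SubNFA.IsLaNFA [DecidableEq S] (A : SubNFA Sigma S) : Prop :=
  ∀ k ∈ A.kinds, k = Kind.pla

/-- An at-NFA: all kind labels are `at` (atomic grouping). -/
def SubNFA.IsAtNFA [DecidableEq S] (A : SubNFA Sigma S) : Prop :=
  ∀ k ∈ A.kinds, k = Kind.at

/-- A (la,at)-NFA in which (for simplicity) only the kinds `pla` and `at` occur. -/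
def SubNFA.IsLaAtNFA [DecidableEq S] (A : SubNFA Sigma S) : Prop :=
  ∀ k ∈ A.kinds, k = Kind.pla ∨ k = Kind.at

/-- One global ε-step of an NFA with sub-automata: an `Eps` or `Branch` transition, or a
`Sub` transition with a look-around kind (from the transition's source to its successor),
of a non-accepting top-level state of any component automaton. -/
def SubNFA.epsStep (A : SubNFA Sigma S) (q q' : S) : Prop :=
  ∃ B ∈ A.comps, q ∈ B.Q ∧ q ∉ B.F ∧
    (B.T q = SubTrans.eps q' ∨
     (∃ q'', B.T q = SubTrans.branch q' q'') ∨
     (∃ q'', B.T q = SubTrans.branch q'' q') ∨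
     (∃ k A'', B.T q = SubTrans.sub k A'' q' ∧ k ≠ Kind.at))

/-- The NFA with sub-automata has no ε-loops. -/
def SubNFA.NoEpsLoops (A : SubNFA Sigma S) : Prop :=
  ∀ q : S, ¬ Relation.TransGen A.epsStep q q

/-- All pairs (state, transition) of non-accepting top-level states of all component
automata of `A`. -/
def SubNFA.allTransNF [DecidableEq S] (A : SubNFA Sigma S) : List (S × SubTrans Sigma S) :=
  A.comps.flatMap fun B => (B.Q.filter (fun q => decide (q ∉ B.F))).map fun q => (q, B.T q)

/-- How many of the buckets in the definition of the in-degree of `q` a given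
transition contributes to. -/
def SubTrans.hits [DecidableEq S] (t : SubTrans Sigma S) (q : S) : ℕ :=
  match t with
  | .eps q' => if q' = q then 1 else 0
  | .char _ q' => if q' = q then 1 else 0
  | .branch q' q'' => (if q' = q then 1 else 0) + (if q'' = q then 1 else 0)
  | .sub _ _ q' => if q' = q then 1 else 0

/-- The in-degree `#in(q)` of a state of an NFA with sub-automata. -/
def SubNFA.inDeg [DecidableEq S] (A : SubNFA Sigma S) (q : S) : ℕ :=
  (A.allTransNF.map (fun p => p.2.hits q)).sum +
  (if q ∈ A.comps.map SubNFA.q0 then 1 else 0)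

/-- The maximal in-degree `#in(A)`. -/
def SubNFA.inDegMax [DecidableEq S] (A : SubNFA Sigma S) : ℕ :=
  (A.allStates.map A.inDeg).foldr max 0

/-! ## run elements for `Memo-la` and `Match-(la,at)` -/

/-- Elements of runs of `Memo-la` (and of `Match-(la,at)`): calls `C(q,i)`,
memoization-table invocations `M(q,i)`, and the results `S(i')`, `S'` (bare success),
and `F`. -/
inductive LaRunElem (S : Type) : Type where
  | call : S → ℕ → LaRunElem S
  | memo : S → ℕ → LaRunElem S
  | succAt : ℕ → LaRunElem S
  | succ : LaRunElem S
  | fail : LaRunElem S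
deriving DecidableEq

def LaRunElem.isRet : LaRunElem S → Bool
  | .succAt _ => true
  | .succ => true
  | .fail => true
  | _ => false

def LaRunElem.isCall : LaRunElem S → Bool
  | .call _ _ => true
  | .memo _ _ => true
  | _ => false

def laMemoToCall : LaRunElem S → Option (LaRunElem S)
  | .memo q i => some (.call q i)
  | _ => none

def Result.laElem {S : Type} : Result → LaRunElem S
  | .successAt i => .succAt i
  | .failure => .fail

/-! ## The backtracking matching algorithm `Match-(la,at)` -/

/-- Big-step semantics (with produced run) of the backtracking matching algorithm
`Match-(la,at)` for NFAs with sub-automata: `LAMatchRun w A q i r s` means the call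
`Match-(la,at)_{A,w}(q, i)` terminates with result `r` and produces the run `s`.
For simplicity, only the look-around kind `pla` (besides `at`) is treated. -/
inductive LAMatchRun (w : List Sigma) :
    SubNFA Sigma S → S → ℕ → Result → List (LaRunElem S) → Prop where
  | accept {A : SubNFA Sigma S} {q : S} {i : ℕ} : q ∈ A.F →
      LAMatchRun w A q i (.successAt i) [.call q i, .succAt i]
  | eps {A : SubNFA Sigma S} {q q' : S} {i : ℕ} {r : Result} {s : List (LaRunElem S)} :
      q ∉ A.F → A.T q = SubTrans.eps q' →
      LAMatchRun w A q' i r s →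
      LAMatchRun w A q i r (.call q i :: s ++ [r.laElem])
  | branchSucc {A : SubNFA Sigma S} {q q' q'' : S} {i i' : ℕ} {s : List (LaRunElem S)} :
      q ∉ A.F → A.T q = SubTrans.branch q' q'' →
      LAMatchRun w A q' i (.successAt i') s →
      LAMatchRun w A q i (.successAt i') (.call q i :: s ++ [LaRunElem.succAt i'])
  | branchFail {A : SubNFA Sigma S} {q q' q'' : S} {i : ℕ} {r : Result}
      {s s' : List (LaRunElem S)} :
      q ∉ A.F → A.T q = SubTrans.branch q' q'' →
      LAMatchRun w A q' i .failure s →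
      LAMatchRun w A q'' i r s' →
      LAMatchRun w A q i r (.call q i :: s ++ s' ++ [r.laElem])
  | charSucc {A : SubNFA Sigma S} {q q' : S} {σ : Sigma} {i : ℕ} {r : Result}
      {s : List (LaRunElem S)} :
      q ∉ A.F → A.T q = SubTrans.char σ q' →
      w[i]? = some σ →
      LAMatchRun w A q' (i + 1) r s →
      LAMatchRun w A q i r (.call q i :: s ++ [r.laElem])
  | charFail {A : SubNFA Sigma S} {q q' : S} {σ : Sigma} {i : ℕ} :
      q ∉ A.F → A.T q = SubTrans.char σ q' →
      w[i]? ≠ some σ →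
      LAMatchRun w A q i .failure [.call q i, .fail]
  | plaSucc {A A' : SubNFA Sigma S} {q q' : S} {i i' : ℕ} {r : Result}
      {s1 s2 : List (LaRunElem S)} :
      q ∉ A.F → A.T q = SubTrans.sub Kind.pla A' q' →
      LAMatchRun w A' A'.q0 i (.successAt i') s1 →
      LAMatchRun w A q' i r s2 →
      LAMatchRun w A q i r (.call q i :: s1 ++ s2 ++ [r.laElem])
  | plaFail {A A' : SubNFA Sigma S} {q q' : S} {i : ℕ} {s1 : List (LaRunElem S)} :
      q ∉ A.F → A.T q = SubTrans.sub Kind.pla A' q' →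
      LAMatchRun w A' A'.q0 i .failure s1 →
      LAMatchRun w A q i .failure (.call q i :: s1 ++ [LaRunElem.fail])
  | atSucc {A A' : SubNFA Sigma S} {q q' : S} {i i' : ℕ} {r : Result}
      {s1 s2 : List (LaRunElem S)} :
      q ∉ A.F → A.T q = SubTrans.sub Kind.at A' q' →
      LAMatchRun w A' A'.q0 i (.successAt i') s1 →
      LAMatchRun w A q' i' r s2 →
      LAMatchRun w A q i r (.call q i :: s1 ++ s2 ++ [r.laElem])
  | atFail {A A' : SubNFA Sigma S} {q q' : S} {i : ℕ} {s1 : List (LaRunElem S)} :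
      q ∉ A.F → A.T q = SubTrans.sub Kind.at A' q' →
      LAMatchRun w A' A'.q0 i .failure s1 →
      LAMatchRun w A q i .failure (.call q i :: s1 ++ [LaRunElem.fail])

/-! ## `Memo-la` -/

/-- Values of the memoization table of `Memo-la`: `Failure` or `Success`. -/
inductive LaVal : Type where
  | success : LaVal
  | failure : LaVal
deriving DecidableEq

/-- Results of `Memo-la`: `SuccessAt i'`, bare `Success`, or `Failure`. -/
inductive LaResult : Type where
  | successAt : ℕ → LaResult
  | success : LaResult
  | failure : LaResult
deriving DecidableEq

def LaVal.toResult : LaVal → LaResult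
  | .success => .success
  | .failure => .failure

def LaResult.elem {S : Type} : LaResult → LaRunElem S
  | .successAt i => .succAt i
  | .success => .succ
  | .failure => .fail

def Result.toLa : Result → LaResult
  | .successAt i => .successAt i
  | .failure => .failure

/-- The final recording of `Memo-la`: `M(q,i) := Success` if the result is
`SuccessAt i'` or `Success`, and `M(q,i) := Failure` if the result is `Failure`. -/
def laRecord [DecidableEq S] (M : S × ℕ → Option LaVal) (q : S) (i : ℕ) (r : LaResult) :
    S × ℕ → Option LaVal :=
  fun p => if p = (q, i) then
    some (match r with | .failure => LaVal.failure | _ => LaVal.success)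
  else M p

/-- Big-step semantics (with resulting memoization table and produced run) of the
memoized backtracking matching algorithm `Memo-la` for la-NFAs:
`MemoLaRun w A q i M M' r s` means the call `Memo-la^M_{A,w}(q, i)` terminates with
result `r`, final memoization table `M'`, and produces the run `s`. The memoization
table is shared between the top-level automaton and all sub-automata. -/
inductive MemoLaRun [DecidableEq S] (w : List Sigma) :
    SubNFA Sigma S → S → ℕ → (S × ℕ → Option LaVal) → (S × ℕ → Option LaVal) →
    LaResult → List (LaRunElem S) → Prop where
  | memoHit {A : SubNFA Sigma S} {q : S} {i : ℕ} {M : S × ℕ → Option LaVal} {v : LaVal} :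
      M (q, i) = some v →
      MemoLaRun w A q i M M v.toResult [.memo q i, v.toResult.elem]
  | accept {A : SubNFA Sigma S} {q : S} {i : ℕ} {M : S × ℕ → Option LaVal} :
      M (q, i) = none → q ∈ A.F →
      MemoLaRun w A q i M (laRecord M q i (.successAt i)) (.successAt i)
        [.call q i, .succAt i]
  | eps {A : SubNFA Sigma S} {q q' : S} {i : ℕ} {M M' : S × ℕ → Option LaVal}
      {r : LaResult} {s : List (LaRunElem S)} :
      M (q, i) = none → q ∉ A.F → A.T q = SubTrans.eps q' →
      MemoLaRun w A q' i M M' r s →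
      MemoLaRun w A q i M (laRecord M' q i r) r (.call q i :: s ++ [r.elem])
  | branchNoFail {A : SubNFA Sigma S} {q q' q'' : S} {i : ℕ}
      {M M' : S × ℕ → Option LaVal} {r : LaResult} {s : List (LaRunElem S)} :
      M (q, i) = none → q ∉ A.F → A.T q = SubTrans.branch q' q'' →
      MemoLaRun w A q' i M M' r s → r ≠ .failure →
      MemoLaRun w A q i M (laRecord M' q i r) r (.call q i :: s ++ [r.elem])
  | branchFail {A : SubNFA Sigma S} {q q' q'' : S} {i : ℕ}
      {M M1 M2 : S × ℕ → Option LaVal} {r : LaResult} {s1 s2 : List (LaRunElem S)} :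
      M (q, i) = none → q ∉ A.F → A.T q = SubTrans.branch q' q'' →
      MemoLaRun w A q' i M M1 .failure s1 →
      MemoLaRun w A q'' i M1 M2 r s2 →
      MemoLaRun w A q i M (laRecord M2 q i r) r (.call q i :: s1 ++ s2 ++ [r.elem])
  | charSucc {A : SubNFA Sigma S} {q q' : S} {σ : Sigma} {i : ℕ}
      {M M' : S × ℕ → Option LaVal} {r : LaResult} {s : List (LaRunElem S)} :
      M (q, i) = none → q ∉ A.F → A.T q = SubTrans.char σ q' →
      w[i]? = some σ →
      MemoLaRun w A q' (i + 1) M M' r s →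
      MemoLaRun w A q i M (laRecord M' q i r) r (.call q i :: s ++ [r.elem])
  | charFail {A : SubNFA Sigma S} {q q' : S} {σ : Sigma} {i : ℕ}
      {M : S × ℕ → Option LaVal} :
      M (q, i) = none → q ∉ A.F → A.T q = SubTrans.char σ q' →
      w[i]? ≠ some σ →
      MemoLaRun w A q i M (laRecord M q i .failure) .failure [.call q i, .fail]
  | plaSucc {A A' : SubNFA Sigma S} {q q' : S} {i : ℕ}
      {M M1 M2 : S × ℕ → Option LaVal} {r1 r : LaResult} {s1 s2 : List (LaRunElem S)} :
      M (q, i) = none → q ∉ A.F → A.T q = SubTrans.sub Kind.pla A' q' →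
      MemoLaRun w A' A'.q0 i M M1 r1 s1 → r1 ≠ .failure →
      MemoLaRun w A q' i M1 M2 r s2 →
      MemoLaRun w A q i M (laRecord M2 q i r) r (.call q i :: s1 ++ s2 ++ [r.elem])
  | plaFail {A A' : SubNFA Sigma S} {q q' : S} {i : ℕ}
      {M M1 : S × ℕ → Option LaVal} {s1 : List (LaRunElem S)} :
      M (q, i) = none → q ∉ A.F → A.T q = SubTrans.sub Kind.pla A' q' →
      MemoLaRun w A' A'.q0 i M M1 .failure s1 →
      MemoLaRun w A q i M (laRecord M1 q i .failure) .failure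
        (.call q i :: s1 ++ [LaRunElem.fail])

/-! ## `Memo-at` -/

/-- Results of `Memo-at`: `SuccessAt(i', K)` with a set `K` of delayed memoization keys,
or `Failure(j)` with a nesting depth `j`. -/
inductive AtResult (S : Type) : Type where
  | successAt : ℕ → Finset (S × ℕ) → AtResult S
  | failure : ℕ → AtResult S

/-- Elements of runs of `Memo-at`: calls `C(q,i)`, memoization-table invocations
`M(q,i)`, and results `S(i')` and `F(j)`. -/
inductive AtRunElem (S : Type) : Type where
  | call : S → ℕ → AtRunElem S
  | memo : S → ℕ → AtRunElem S
  | succ : ℕ → AtRunElem S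
  | fail : ℕ → AtRunElem S
deriving DecidableEq

def AtRunElem.isRet : AtRunElem S → Bool
  | .succ _ => true
  | .fail _ => true
  | _ => false

def AtRunElem.isCall : AtRunElem S → Bool
  | .call _ _ => true
  | .memo _ _ => true
  | _ => false

def atMemoToCall : AtRunElem S → Option (AtRunElem S)
  | .memo q i => some (.call q i)
  | _ => none

def AtResult.elem {S : Type} : AtResult S → AtRunElem S
  | .successAt i _ => .succ i
  | .failure j => .fail j

/-- `f`, converting results of `Memo-at` to results of `Match-(la,at)`. -/
def AtResult.toResult {S : Type} : AtResult S → Result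
  | .successAt i _ => .successAt i
  | .failure _ => .failure

/-- The final step of `Memo-at`: on success, the key `(q,i)` is added to the set of
delayed keys. -/
def atFinal [DecidableEq S] (q : S) (i : ℕ) : AtResult S → AtResult S
  | .successAt i' K => .successAt i' (insert (q, i) K)
  | .failure j => .failure j

/-- The final recording of `Memo-at`: `M(q,i) := Failure(j)` if the result is
`Failure(j)`. -/
def atRecord [DecidableEq S] (M : S × ℕ → Option ℕ) (q : S) (i : ℕ) :
    AtResult S → (S × ℕ → Option ℕ)
  | .failure j => fun p => if p = (q, i) then some j else M p
  | _ => M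

/-- Batch recording `M(k) := Failure(j)` for every `k ∈ K`. -/
def atBatch [DecidableEq S] (M : S × ℕ → Option ℕ) (K : Finset (S × ℕ)) (j : ℕ) :
    S × ℕ → Option ℕ :=
  fun p => if p ∈ K then some j else M p

/-- Big-step semantics (with resulting memoization table and produced run) of the
memoized backtracking matching algorithm `Memo-at` for at-NFAs:
`MemoAtRun A0 w A q i M M' r s` means the call `Memo-at^M_{A0,A,w}(q, i)` (with the
whole automaton `A0` and current sub-automaton `A`) terminates with result `r`, final
memoization table `M'`, and produces the run `s`. -/
inductive MemoAtRun [DecidableEq S] (A0 : SubNFA Sigma S) (w : List Sigma) :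
    SubNFA Sigma S → S → ℕ → (S × ℕ → Option ℕ) → (S × ℕ → Option ℕ) →
    AtResult S → List (AtRunElem S) → Prop where
  | memoHit {A : SubNFA Sigma S} {q : S} {i j : ℕ} {M : S × ℕ → Option ℕ} :
      M (q, i) = some j →
      MemoAtRun A0 w A q i M M (.failure j) [.memo q i, .fail j]
  | accept {A : SubNFA Sigma S} {q : S} {i : ℕ} {M : S × ℕ → Option ℕ} :
      M (q, i) = none → q ∈ A.F →
      MemoAtRun A0 w A q i M M (.successAt i {(q, i)}) [.call q i, .succ i]
  | eps {A : SubNFA Sigma S} {q q' : S} {i : ℕ} {M M' : S × ℕ → Option ℕ}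
      {r : AtResult S} {s : List (AtRunElem S)} :
      M (q, i) = none → q ∉ A.F → A.T q = SubTrans.eps q' →
      MemoAtRun A0 w A q' i M M' r s →
      MemoAtRun A0 w A q i M (atRecord M' q i r) (atFinal q i r)
        (.call q i :: s ++ [r.elem])
  | branchNoBT {A : SubNFA Sigma S} {q q' q'' : S} {i : ℕ} {M M' : S × ℕ → Option ℕ}
      {r : AtResult S} {s : List (AtRunElem S)} :
      M (q, i) = none → q ∉ A.F → A.T q = SubTrans.branch q' q'' →
      MemoAtRun A0 w A q' i M M' r s →
      (∀ j, r = AtResult.failure j → j ≠ A0.nu q) →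
      MemoAtRun A0 w A q i M (atRecord M' q i r) (atFinal q i r)
        (.call q i :: s ++ [r.elem])
  | branchBTSucc {A : SubNFA Sigma S} {q q' q'' : S} {i i'' : ℕ} {K : Finset (S × ℕ)}
      {M M1 M2 : S × ℕ → Option ℕ} {s1 s2 : List (AtRunElem S)} :
      M (q, i) = none → q ∉ A.F → A.T q = SubTrans.branch q' q'' →
      MemoAtRun A0 w A q' i M M1 (.failure (A0.nu q)) s1 →
      MemoAtRun A0 w A q'' i M1 M2 (.successAt i'' K) s2 →
      MemoAtRun A0 w A q i M M2 (atFinal q i (.successAt i'' K))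
        (.call q i :: s1 ++ s2 ++ [AtRunElem.succ i''])
  | branchBTFail {A : SubNFA Sigma S} {q q' q'' : S} {i j' : ℕ}
      {M M1 M2 : S × ℕ → Option ℕ} {s1 s2 : List (AtRunElem S)} :
      M (q, i) = none → q ∉ A.F → A.T q = SubTrans.branch q' q'' →
      MemoAtRun A0 w A q' i M M1 (.failure (A0.nu q)) s1 →
      MemoAtRun A0 w A q'' i M1 M2 (.failure j') s2 →
      MemoAtRun A0 w A q i M (atRecord M2 q i (.failure (min (A0.nu q) j')))
        (.failure (min (A0.nu q) j'))
        (.call q i :: s1 ++ s2 ++ [AtRunElem.fail (min (A0.nu q) j')])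
  | charSucc {A : SubNFA Sigma S} {q q' : S} {σ : Sigma} {i : ℕ}
      {M M' : S × ℕ → Option ℕ} {r : AtResult S} {s : List (AtRunElem S)} :
      M (q, i) = none → q ∉ A.F → A.T q = SubTrans.char σ q' →
      w[i]? = some σ →
      MemoAtRun A0 w A q' (i + 1) M M' r s →
      MemoAtRun A0 w A q i M (atRecord M' q i r) (atFinal q i r)
        (.call q i :: s ++ [r.elem])
  | charFail {A : SubNFA Sigma S} {q q' : S} {σ : Sigma} {i : ℕ}
      {M : S × ℕ → Option ℕ} :
      M (q, i) = none → q ∉ A.F → A.T q = SubTrans.char σ q' →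
      w[i]? ≠ some σ →
      MemoAtRun A0 w A q i M (atRecord M q i (.failure (A0.nu q)))
        (.failure (A0.nu q)) [.call q i, .fail (A0.nu q)]
  | subSuccSucc {A A' : SubNFA Sigma S} {q q' : S} {i i' i'' : ℕ}
      {K' K'' : Finset (S × ℕ)} {M M1 M2 : S × ℕ → Option ℕ}
      {s1 s2 : List (AtRunElem S)} :
      M (q, i) = none → q ∉ A.F → A.T q = SubTrans.sub Kind.at A' q' →
      MemoAtRun A0 w A' A'.q0 i M M1 (.successAt i' K') s1 →
      MemoAtRun A0 w A q' i' M1 M2 (.successAt i'' K'') s2 →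
      MemoAtRun A0 w A q i M M2 (atFinal q i (.successAt i'' (K' ∪ K'')))
        (.call q i :: s1 ++ s2 ++ [AtRunElem.succ i''])
  | subSuccFail {A A' : SubNFA Sigma S} {q q' : S} {i i' j : ℕ} {K' : Finset (S × ℕ)}
      {M M1 M2 : S × ℕ → Option ℕ} {s1 s2 : List (AtRunElem S)} :
      M (q, i) = none → q ∉ A.F → A.T q = SubTrans.sub Kind.at A' q' →
      MemoAtRun A0 w A' A'.q0 i M M1 (.successAt i' K') s1 →
      MemoAtRun A0 w A q' i' M1 M2 (.failure j) s2 →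
      MemoAtRun A0 w A q i M (atRecord (atBatch M2 K' j) q i (.failure j)) (.failure j)
        (.call q i :: s1 ++ s2 ++ [AtRunElem.fail j])
  | subFailHigh {A A' : SubNFA Sigma S} {q q' : S} {i j : ℕ}
      {M M1 : S × ℕ → Option ℕ} {s1 : List (AtRunElem S)} :
      M (q, i) = none → q ∉ A.F → A.T q = SubTrans.sub Kind.at A' q' →
      MemoAtRun A0 w A' A'.q0 i M M1 (.failure j) s1 →
      A0.nu q < j →
      MemoAtRun A0 w A q i M (atRecord M1 q i (.failure (A0.nu q)))
        (.failure (A0.nu q)) (.call q i :: s1 ++ [AtRunElem.fail (A0.nu q)])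
  | subFailLow {A A' : SubNFA Sigma S} {q q' : S} {i j : ℕ}
      {M M1 : S × ℕ → Option ℕ} {s1 : List (AtRunElem S)} :
      M (q, i) = none → q ∉ A.F → A.T q = SubTrans.sub Kind.at A' q' →
      MemoAtRun A0 w A' A'.q0 i M M1 (.failure j) s1 →
      j ≤ A0.nu q →
      MemoAtRun A0 w A q i M (atRecord M1 q i (.failure j)) (.failure j)
        (.call q i :: s1 ++ [AtRunElem.fail j])

/-! ## The combined algorithm `Memo-(la,at)` -/

/-- Values of the memoization table of `Memo-(la,at)`: `Success` or `Failure(j)`. -/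
inductive LaAtVal : Type where
  | success : LaAtVal
  | failure : ℕ → LaAtVal

/-- Results of `Memo-(la,at)`: `SuccessAt(i', K)`, bare `Success`, or `Failure(j)`. -/
inductive LaAtResult (S : Type) : Type where
  | successAt : ℕ → Finset (S × ℕ) → LaAtResult S
  | success : LaAtResult S
  | failure : ℕ → LaAtResult S

def LaAtVal.toResult {S : Type} : LaAtVal → LaAtResult S
  | .success => .success
  | .failure j => .failure j

/-- `f`, converting results of `Memo-(la,at)` to results of `Match-(la,at)`
(undefined on the bare value `Success`). -/
def LaAtResult.toResult? {S : Type} : LaAtResult S → Option Result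
  | .successAt i _ => some (.successAt i)
  | .success => none
  | .failure _ => some .failure

def laAtFinal [DecidableEq S] (q : S) (i : ℕ) : LaAtResult S → LaAtResult S
  | .successAt i' K => .successAt i' (insert (q, i) K)
  | r => r

def laAtRecord [DecidableEq S] (M : S × ℕ → Option LaAtVal) (q : S) (i : ℕ) :
    LaAtResult S → (S × ℕ → Option LaAtVal)
  | .successAt _ _ => M
  | .success => fun p => if p = (q, i) then some LaAtVal.success else M p
  | .failure j => fun p => if p = (q, i) then some (LaAtVal.failure j) else M p

def laAtBatch [DecidableEq S] (M : S × ℕ → Option LaAtVal) (K : Finset (S × ℕ))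
    (v : LaAtVal) : S × ℕ → Option LaAtVal :=
  fun p => if p ∈ K then some v else M p

/-- Big-step semantics (with resulting memoization table and the number of recursive
calls made) of the combined memoized backtracking matching algorithm `Memo-(la,at)`:
`MemoLaAtRun w A0 A q i M M' r n` means the call `Memo-(la,at)^M_{A0,A,w}(q, i)`
terminates with result `r`, final memoization table `M'`, making `n` calls in total.
On a positive look-ahead transition, the sub-automaton becomes the new whole automaton
(so nesting depths of atomic grouping are reset by look-around operators). -/
inductive MemoLaAtRun [DecidableEq S] (w : List Sigma) :
    SubNFA Sigma S → SubNFA Sigma S → S → ℕ →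
    (S × ℕ → Option LaAtVal) → (S × ℕ → Option LaAtVal) → LaAtResult S → ℕ → Prop where
  | memoHit {A0 A : SubNFA Sigma S} {q : S} {i : ℕ} {M : S × ℕ → Option LaAtVal}
      {v : LaAtVal} :
      M (q, i) = some v →
      MemoLaAtRun w A0 A q i M M v.toResult 1
  | accept {A0 A : SubNFA Sigma S} {q : S} {i : ℕ} {M : S × ℕ → Option LaAtVal} :
      M (q, i) = none → q ∈ A.F →
      MemoLaAtRun w A0 A q i M M (.successAt i {(q, i)}) 1
  | eps {A0 A : SubNFA Sigma S} {q q' : S} {i : ℕ} {M M' : S × ℕ → Option LaAtVal}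
      {r : LaAtResult S} {n : ℕ} :
      M (q, i) = none → q ∉ A.F → A.T q = SubTrans.eps q' →
      MemoLaAtRun w A0 A q' i M M' r n →
      MemoLaAtRun w A0 A q i M (laAtRecord M' q i (laAtFinal q i r)) (laAtFinal q i r)
        (n + 1)
  | branchNoBT {A0 A : SubNFA Sigma S} {q q' q'' : S} {i : ℕ}
      {M M' : S × ℕ → Option LaAtVal} {r : LaAtResult S} {n : ℕ} :
      M (q, i) = none → q ∉ A.F → A.T q = SubTrans.branch q' q'' →
      MemoLaAtRun w A0 A q' i M M' r n →
      (∀ j, r = LaAtResult.failure j → j ≠ A0.nu q) →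
      MemoLaAtRun w A0 A q i M (laAtRecord M' q i (laAtFinal q i r)) (laAtFinal q i r)
        (n + 1)
  | branchBTFail {A0 A : SubNFA Sigma S} {q q' q'' : S} {i j' : ℕ}
      {M M1 M2 : S × ℕ → Option LaAtVal} {n1 n2 : ℕ} :
      M (q, i) = none → q ∉ A.F → A.T q = SubTrans.branch q' q'' →
      MemoLaAtRun w A0 A q' i M M1 (.failure (A0.nu q)) n1 →
      MemoLaAtRun w A0 A q'' i M1 M2 (.failure j') n2 →
      MemoLaAtRun w A0 A q i M
        (laAtRecord M2 q i (.failure (min (A0.nu q) j')))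
        (.failure (min (A0.nu q) j')) (n1 + n2 + 1)
  | branchBTOther {A0 A : SubNFA Sigma S} {q q' q'' : S} {i : ℕ}
      {M M1 M2 : S × ℕ → Option LaAtVal} {r : LaAtResult S} {n1 n2 : ℕ} :
      M (q, i) = none → q ∉ A.F → A.T q = SubTrans.branch q' q'' →
      MemoLaAtRun w A0 A q' i M M1 (.failure (A0.nu q)) n1 →
      MemoLaAtRun w A0 A q'' i M1 M2 r n2 →
      (∀ j, r ≠ LaAtResult.failure j) →
      MemoLaAtRun w A0 A q i M (laAtRecord M2 q i (laAtFinal q i r)) (laAtFinal q i r)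
        (n1 + n2 + 1)
  | charSucc {A0 A : SubNFA Sigma S} {q q' : S} {σ : Sigma} {i : ℕ}
      {M M' : S × ℕ → Option LaAtVal} {r : LaAtResult S} {n : ℕ} :
      M (q, i) = none → q ∉ A.F → A.T q = SubTrans.char σ q' →
      w[i]? = some σ →
      MemoLaAtRun w A0 A q' (i + 1) M M' r n →
      MemoLaAtRun w A0 A q i M (laAtRecord M' q i (laAtFinal q i r)) (laAtFinal q i r)
        (n + 1)
  | charFail {A0 A : SubNFA Sigma S} {q q' : S} {σ : Sigma} {i : ℕ}
      {M : S × ℕ → Option LaAtVal} :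
      M (q, i) = none → q ∉ A.F → A.T q = SubTrans.char σ q' →
      w[i]? ≠ some σ →
      MemoLaAtRun w A0 A q i M (laAtRecord M q i (.failure (A0.nu q)))
        (.failure (A0.nu q)) 1
  | plaSuccAt {A0 A A' : SubNFA Sigma S} {q q' : S} {i i' : ℕ} {K' : Finset (S × ℕ)}
      {M M1 M2 : S × ℕ → Option LaAtVal} {r : LaAtResult S} {n1 n2 : ℕ} :
      M (q, i) = none → q ∉ A.F → A.T q = SubTrans.sub Kind.pla A' q' →
      MemoLaAtRun w A' A' A'.q0 i M M1 (.successAt i' K') n1 →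
      MemoLaAtRun w A0 A q' i (laAtBatch M1 K' LaAtVal.success) M2 r n2 →
      MemoLaAtRun w A0 A q i M (laAtRecord M2 q i (laAtFinal q i r)) (laAtFinal q i r)
        (n1 + n2 + 1)
  | plaBare {A0 A A' : SubNFA Sigma S} {q q' : S} {i : ℕ}
      {M M1 M2 : S × ℕ → Option LaAtVal} {r : LaAtResult S} {n1 n2 : ℕ} :
      M (q, i) = none → q ∉ A.F → A.T q = SubTrans.sub Kind.pla A' q' →
      MemoLaAtRun w A' A' A'.q0 i M M1 .success n1 →
      MemoLaAtRun w A0 A q' i M1 M2 r n2 →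
      MemoLaAtRun w A0 A q i M (laAtRecord M2 q i (laAtFinal q i r)) (laAtFinal q i r)
        (n1 + n2 + 1)
  | plaFail {A0 A A' : SubNFA Sigma S} {q q' : S} {i j : ℕ}
      {M M1 : S × ℕ → Option LaAtVal} {n1 : ℕ} :
      M (q, i) = none → q ∉ A.F → A.T q = SubTrans.sub Kind.pla A' q' →
      MemoLaAtRun w A' A' A'.q0 i M M1 (.failure j) n1 →
      MemoLaAtRun w A0 A q i M (laAtRecord M1 q i (.failure (A0.nu q)))
        (.failure (A0.nu q)) (n1 + 1)
  | atSuccSucc {A0 A A' : SubNFA Sigma S} {q q' : S} {i i' i'' : ℕ}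
      {K' K'' : Finset (S × ℕ)} {M M1 M2 : S × ℕ → Option LaAtVal} {n1 n2 : ℕ} :
      M (q, i) = none → q ∉ A.F → A.T q = SubTrans.sub Kind.at A' q' →
      MemoLaAtRun w A0 A' A'.q0 i M M1 (.successAt i' K') n1 →
      MemoLaAtRun w A0 A q' i' M1 M2 (.successAt i'' K'') n2 →
      MemoLaAtRun w A0 A q i M M2
        (laAtFinal q i (.successAt i'' (K' ∪ K''))) (n1 + n2 + 1)
  | atSuccBare {A0 A A' : SubNFA Sigma S} {q q' : S} {i i' : ℕ} {K' : Finset (S × ℕ)}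
      {M M1 M2 : S × ℕ → Option LaAtVal} {n1 n2 : ℕ} :
      M (q, i) = none → q ∉ A.F → A.T q = SubTrans.sub Kind.at A' q' →
      MemoLaAtRun w A0 A' A'.q0 i M M1 (.successAt i' K') n1 →
      MemoLaAtRun w A0 A q' i' M1 M2 .success n2 →
      MemoLaAtRun w A0 A q i M
        (laAtRecord (laAtBatch M2 K' LaAtVal.success) q i .success) .success
        (n1 + n2 + 1)
  | atSuccFail {A0 A A' : SubNFA Sigma S} {q q' : S} {i i' j : ℕ} {K' : Finset (S × ℕ)}
      {M M1 M2 : S × ℕ → Option LaAtVal} {n1 n2 : ℕ} :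
      M (q, i) = none → q ∉ A.F → A.T q = SubTrans.sub Kind.at A' q' →
      MemoLaAtRun w A0 A' A'.q0 i M M1 (.successAt i' K') n1 →
      MemoLaAtRun w A0 A q' i' M1 M2 (.failure j) n2 →
      MemoLaAtRun w A0 A q i M
        (laAtRecord (laAtBatch M2 K' (LaAtVal.failure j)) q i (.failure j))
        (.failure j) (n1 + n2 + 1)
  | atBare {A0 A A' : SubNFA Sigma S} {q q' : S} {i : ℕ}
      {M M1 : S × ℕ → Option LaAtVal} {n1 : ℕ} :
      M (q, i) = none → q ∉ A.F → A.T q = SubTrans.sub Kind.at A' q' →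
      MemoLaAtRun w A0 A' A'.q0 i M M1 .success n1 →
      MemoLaAtRun w A0 A q i M (laAtRecord M1 q i .success) .success (n1 + 1)
  | atFailHigh {A0 A A' : SubNFA Sigma S} {q q' : S} {i j : ℕ}
      {M M1 : S × ℕ → Option LaAtVal} {n1 : ℕ} :
      M (q, i) = none → q ∉ A.F → A.T q = SubTrans.sub Kind.at A' q' →
      MemoLaAtRun w A0 A' A'.q0 i M M1 (.failure j) n1 →
      A0.nu q < j →
      MemoLaAtRun w A0 A q i M (laAtRecord M1 q i (.failure (A0.nu q)))
        (.failure (A0.nu q)) (n1 + 1)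
  | atFailLow {A0 A A' : SubNFA Sigma S} {q q' : S} {i j : ℕ}
      {M M1 : S × ℕ → Option LaAtVal} {n1 : ℕ} :
      M (q, i) = none → q ∉ A.F → A.T q = SubTrans.sub Kind.at A' q' →
      MemoLaAtRun w A0 A' A'.q0 i M M1 (.failure j) n1 →
      j ≤ A0.nu q →
      MemoLaAtRun w A0 A q i M (laAtRecord M1 q i (.failure j)) (.failure j) (n1 + 1)



/-! ### Helper facts -/

/-- One step of the configuration graph. -/
inductive CStep (A : NFA Sigma S) : S × ℕ → S × ℕ → Prop where
  | eps {q q' : S} {i : ℕ} : A.epsStep q q' → CStep A (q, i) (q', i)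
  | char {q q' : S} {i : ℕ} : CStep A (q, i) (q', i + 1)

theorem cstep_trans (A : NFA Sigma S) {a b : S × ℕ} (h : Relation.TransGen (CStep A) a b) :
    a.2 < b.2 ∨ (a.2 = b.2 ∧ Relation.TransGen A.epsStep a.1 b.1) := by
  induction h with
  | single h =>
    cases h with
    | eps h => exact Or.inr ⟨rfl, .single h⟩
    | char => exact Or.inl (Nat.lt_succ_self _)
  | tail _ h ih =>
    cases h with
    | eps h =>
      rcases ih with ih | ⟨ih, ih'⟩
      · exact Or.inl ih
      · exact Or.inr ⟨ih, ih'.tail h⟩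
    | char =>
      left
      rcases ih with ih | ⟨ih, ih'⟩ <;> simp_all <;> omega

theorem cstep_irrefl (A : NFA Sigma S) (hLoop : A.NoEpsLoops) (a : S × ℕ) :
    ¬ Relation.TransGen (CStep A) a a := by
  intro h
  rcases cstep_trans A h with h | ⟨_, h⟩
  · exact lt_irrefl _ h
  · exact hLoop _ h

/-- Balanced sequences of calls and results. -/
inductive Bal : List (RunElem S) → Prop where
  | nil : Bal []
  | wrap {q : S} {i : ℕ} {b : List (RunElem S)} {r : Result} : Bal b →
      Bal (.call q i :: b ++ [r.elem])
  | append {b c : List (RunElem S)} : Bal b → Bal c → Bal (b ++ c)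

theorem elem_isRet (r : Result) : (r.elem : RunElem S).isRet = true := by
  cases r <;> rfl

theorem matchRun_shape {A : NFA Sigma S} {w : List Sigma} {q : S} {i : ℕ} {r : Result}
    {s : List (RunElem S)} (h : MatchRun A w q i r s) :
    ∃ b, s = .call q i :: b ++ [r.elem] ∧ Bal b := by
  induction h with
  | accept _ => exact ⟨[], rfl, .nil⟩
  | eps _ _ _ ih =>
    obtain ⟨b, rfl, hb⟩ := ih
    exact ⟨_, rfl, .wrap hb⟩
  | branchSucc _ _ _ ih =>
    obtain ⟨b, rfl, hb⟩ := ih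
    exact ⟨_, rfl, .wrap hb⟩
  | branchFail _ _ _ _ ih ih' =>
    obtain ⟨b, rfl, hb⟩ := ih
    obtain ⟨c, rfl, hc⟩ := ih'
    exact ⟨_, rfl, .append (.wrap hb) (.wrap hc)⟩
  | charSucc _ _ _ _ ih =>
    obtain ⟨b, rfl, hb⟩ := ih
    exact ⟨_, rfl, .wrap hb⟩
  | charFail _ _ _ => exact ⟨[], rfl, .nil⟩

theorem bal_noMemo {b : List (RunElem S)} (h : Bal b) : ∀ e ∈ b, memoToCall e = none := by
  induction h with
  | nil => simp
  | @wrap q i b r _ ih =>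
    intro e he
    simp only [List.cons_append, List.mem_cons, List.mem_append, List.not_mem_nil,
      or_false] at he
    rcases he with rfl | he | rfl
    · rfl
    · exact ih e he
    · cases r <;> rfl
  | append _ _ ih ih' =>
    intro e he
    rcases List.mem_append.1 he with he | he
    · exact ih e he
    · exact ih' e he

theorem matchRun_bal {A : NFA Sigma S} {w : List Sigma} {q : S} {i : ℕ} {r : Result}
    {s : List (RunElem S)} (h : MatchRun A w q i r s) : Bal s := by
  obtain ⟨b, rfl, hb⟩ := matchRun_shape h
  exact .wrap hb

theorem phiAux_cons {isRet : α → Bool} {L P X : List α} {e : α} (hL : L = P ++ e :: X)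
    (n : ℕ) : phiAux isRet L P.length n =
      if isRet e then (if n ≤ 1 then some P.length else phiAux isRet L (P.length + 1) (n - 1))
      else phiAux isRet L (P.length + 1) (n + 1) := by
  have h : L[P.length]? = some e := by simp [hL]
  rw [phiAux]
  split
  · simp_all
  · simp_all

theorem phiAux_bal {b : List (RunElem S)} (h : Bal b) :
    ∀ (L P X : List (RunElem S)) (n : ℕ), L = P ++ b ++ X →
      phiAux RunElem.isRet L P.length (n + 1) =
        phiAux RunElem.isRet L (P.length + b.length) (n + 1) := by
  induction h with
  | nil => intros; rfl
  | @wrap q i b r _ ih =>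
    intro L P X n hL
    rw [phiAux_cons (P := P) (e := .call q i) (X := b ++ [r.elem] ++ X) (by simp [hL])]
    have h1 := ih L (P ++ [.call q i]) ([r.elem] ++ X) (n + 1) (by simp [hL])
    have h2 := phiAux_cons (isRet := RunElem.isRet) (L := L) (P := P ++ [.call q i] ++ b)
      (e := r.elem) (X := X) (by simp [hL]) (n + 2)
    simp only [List.length_append, List.length_cons, List.length_nil, elem_isRet] at h1 h2 ⊢
    simp only [RunElem.isRet, Bool.false_eq_true, if_false]
    rw [h1, h2]
    simp
    congr 1
    omega
  | @append b c _ _ ih ih' =>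
    intro L P X n hL
    rw [ih L P (c ++ X) n (by simp [hL])]
    have := ih' L (P ++ b) X n (by simp [hL])
    simp only [List.length_append] at this ⊢
    rw [this, Nat.add_assoc]

theorem phi_run {b : List (RunElem S)} (h : Bal b) (q : S) (i : ℕ) (r : Result)
    (P X : List (RunElem S)) :
    phi RunElem.isRet (P ++ (.call q i :: b ++ [r.elem]) ++ X) P.length =
      some (P.length + (b.length + 1)) := by
  generalize hL : P ++ (.call q i :: b ++ [r.elem]) ++ X = L
  rw [phi, phiAux_cons (P := P) (e := .call q i) (X := b ++ [r.elem] ++ X) (by simp [← hL])]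
  have h1 := phiAux_bal h L (P ++ [.call q i]) ([r.elem] ++ X) 0 (by simp [← hL])
  have h2 := phiAux_cons (isRet := RunElem.isRet) (L := L) (P := P ++ [.call q i] ++ b)
      (e := r.elem) (X := X) (by simp [← hL]) 1
  simp only [List.length_append, List.length_cons, List.length_nil, elem_isRet] at h1 h2 ⊢
  simp only [RunElem.isRet, Bool.false_eq_true, if_false]
  rw [h1, h2]
  simp
  omega

theorem matchRun_det {A : NFA Sigma S} {w : List Sigma} {q : S} {i : ℕ} {r : Result}
    {s : List (RunElem S)} (h : MatchRun A w q i r s) :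
    ∀ {r' : Result} {s' : List (RunElem S)}, MatchRun A w q i r' s' → r = r' ∧ s = s' := by
  induction h with
  | accept hF => intro r' s' h'; cases h' <;> simp_all
  | eps hF hT _ ih =>
    intro r' s' h'
    cases h' with
    | eps hF' hT' h =>
      rw [hT] at hT'; cases hT'
      obtain ⟨rfl, rfl⟩ := ih h
      exact ⟨rfl, rfl⟩
    | _ => simp_all
  | branchSucc hF hT _ ih =>
    intro r' s' h'
    cases h' with
    | branchSucc hF' hT' h =>
      rw [hT] at hT'; cases hT'
      obtain ⟨h1, rfl⟩ := ih h
      cases h1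
      exact ⟨rfl, rfl⟩
    | branchFail hF' hT' h =>
      rw [hT] at hT'; cases hT'
      exact absurd (ih h).1 (by simp)
    | _ => simp_all
  | branchFail hF hT _ _ ih ih' =>
    intro r' s' h'
    cases h' with
    | branchSucc hF' hT' h =>
      rw [hT] at hT'; cases hT'
      exact absurd (ih h).1 (by simp)
    | branchFail hF' hT' h h2 =>
      rw [hT] at hT'; cases hT'
      obtain ⟨_, rfl⟩ := ih h
      obtain ⟨rfl, rfl⟩ := ih' h2
      exact ⟨rfl, rfl⟩
    | _ => simp_all
  | charSucc hF hT hw _ ih =>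
    intro r' s' h'
    cases h' with
    | charSucc hF' hT' hw' h =>
      rw [hT] at hT'; cases hT'
      obtain ⟨rfl, rfl⟩ := ih h
      exact ⟨rfl, rfl⟩
    | _ => simp_all
  | charFail hF hT hw => intro r' s' h'; cases h' <;> simp_all

/-- Every recorded failure has a completed run as its first occurrence in `P`. -/
def TableOK (A : NFA Sigma S) (w : List Sigma) (P : List (RunElem S)) (M : S × ℕ → Bool) :
    Prop :=
  ∀ q i, M (q, i) = true → ∃ P1 s P2, P = P1 ++ s ++ P2 ∧ RunElem.call q i ∉ P1 ∧
    MatchRun A w q i .failure s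

theorem TableOK.append {A : NFA Sigma S} {w : List Sigma} {P : List (RunElem S)}
    {M : S × ℕ → Bool} (h : TableOK A w P M) (X : List (RunElem S)) :
    TableOK A w (P ++ X) M := by
  intro q i hM
  obtain ⟨P1, s, P2, rfl, h1, h2⟩ := h q i hM
  exact ⟨P1, s, P2 ++ X, by simp, h1, h2⟩

/-- Calls in `P` which are not recorded are proper ancestors of the configuration `c`. -/
def PendOK (A : NFA Sigma S) (P : List (RunElem S)) (M : S × ℕ → Bool) (c : S × ℕ) : Prop :=
  ∀ q i, RunElem.call q i ∈ P → M (q, i) = true ∨ Relation.TransGen (CStep A) (q, i) c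

theorem recFail_mono [DecidableEq S] (M : S × ℕ → Bool) (q : S) (i : ℕ) (r : Result)
    (p : S × ℕ) (h : M p = true) : recFail M q i r p = true := by
  cases r <;> simp [recFail, h]

theorem subStar_hit [DecidableEq S] {P1 b P2 R T : List (RunElem S)} {q : S} {i : ℕ}
    (hb : Bal b) (hP1 : RunElem.call q i ∉ P1)
    (hP : ∀ e ∈ P1 ++ (RunElem.call q i :: b ++ [RunElem.fail]) ++ P2, memoToCall e = none)
    (h : SubStar memoToCall RunElem.isRet
      ((P1 ++ (RunElem.call q i :: b ++ [RunElem.fail]) ++ P2) ++ (RunElem.call q i :: b ++ [RunElem.fail]) ++ R) T) :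
    SubStar memoToCall RunElem.isRet
      ((P1 ++ (RunElem.call q i :: b ++ [RunElem.fail]) ++ P2) ++ [RunElem.memo q i, RunElem.fail] ++ R) T := by
  have hphi := phi_run hb q i .failure P1 (P2 ++ [RunElem.memo q i, RunElem.fail] ++ R)
  have hfind : List.findIdx? (· == RunElem.call q i)
      ((P1 ++ (RunElem.call q i :: b ++ [RunElem.fail]) ++ P2) ++ [RunElem.memo q i, RunElem.fail] ++ R)
      = some P1.length := by
    rw [List.findIdx?_eq_some_iff_getElem]
    refine ⟨by simp, by simp, ?_⟩
    intro j hj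
    have : P1[j] ≠ RunElem.call q i := fun h => hP1 (h ▸ List.getElem_mem hj)
    simpa [List.getElem_append, hj] using this
  refine SubStar.step (ℓ := (P1 ++ (RunElem.call q i :: b ++ [RunElem.fail]) ++ P2).length) ?_ ?_ h
  · generalize P1 ++ (RunElem.call q i :: b ++ [RunElem.fail]) ++ P2 = P at hP ⊢
    rw [List.findIdx?_eq_some_iff_getElem]
    refine ⟨by simp, by simp [memoToCall], ?_⟩
    intro j hj
    have := hP _ (List.getElem_mem hj)
    simp [List.getElem_append, hj, this]
  · have hphi' : phi RunElem.isRet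
      ((P1 ++ (RunElem.call q i :: b ++ [RunElem.fail]) ++ P2) ++ [RunElem.memo q i, RunElem.fail] ++ R) P1.length =
      some (P1.length + (b.length + 1)) := by
      rw [← hphi]; simp [Result.elem]
    have hget : ((P1 ++ (RunElem.call q i :: b ++ [RunElem.fail]) ++ P2) ++ [RunElem.memo q i, RunElem.fail] ++ R)[
        (P1 ++ (RunElem.call q i :: b ++ [RunElem.fail]) ++ P2).length]? = some (.memo q i) := by
      rw [List.append_assoc _ [_, _], List.getElem?_append_right le_rfl]; simp
    have hd : (((P1 ++ (RunElem.call q i :: b ++ [RunElem.fail]) ++ P2) ++ [RunElem.memo q i, RunElem.fail] ++ R).drop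
        (P1.length + 1)).take (b.length + 1) = b ++ [RunElem.fail] := by
      have e1 : (P1 ++ (RunElem.call q i :: b ++ [RunElem.fail]) ++ P2) ++ [RunElem.memo q i, RunElem.fail] ++ R =
        (P1 ++ [RunElem.call q i]) ++ ((b ++ [RunElem.fail]) ++ (P2 ++ [RunElem.memo q i, RunElem.fail] ++ R)) := by simp
      rw [e1, List.drop_left' (by simp), List.take_left' (by simp)]
    have hm : P1.length + (b.length + 1) - P1.length = b.length + 1 := by omega
    unfold subExpand
    rw [hget]
    simp only [memoToCall]
    rw [hfind]
    simp only
    rw [hphi']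
    simp only
    rw [hm, hd]
    generalize P1 ++ (RunElem.call q i :: b ++ [RunElem.fail]) ++ P2 = P
    have hdr : (P ++ [RunElem.memo q i, RunElem.fail] ++ R).drop (P.length + 2) = R :=
      List.drop_left' (by simp)
    rw [hdr, List.append_assoc P [_, _] R, List.take_left' rfl]
    simp

theorem tableOK_record [DecidableEq S] {A : NFA Sigma S} {w : List Sigma}
    {P s : List (RunElem S)} {M : S × ℕ → Bool} {q : S} {i : ℕ} {r : Result}
    (h : TableOK A w (P ++ s) M) (hP : RunElem.call q i ∉ P) (hs : MatchRun A w q i r s) :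
    TableOK A w (P ++ s) (recFail M q i r) := by
  intro p j hM
  cases r with
  | successAt k => exact h p j hM
  | failure =>
    by_cases hpj : (p, j) = (q, i)
    · cases hpj
      exact ⟨P, s, [], by simp, hP, hs⟩
    · exact h p j (by simpa [recFail, hpj] using hM)

/-- The conclusion of the main induction. -/
def Concl [DecidableEq S] (A : NFA Sigma S) (w : List Sigma) (P : List (RunElem S))
    (q : S) (i : ℕ) (M M' : S × ℕ → Bool) (r : Result) (t : List (RunElem S)) : Prop :=
  ∃ s, MatchRun A w q i r s ∧
    (∀ R T, SubStar memoToCall RunElem.isRet (P ++ s ++ R) T →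
      SubStar memoToCall RunElem.isRet (P ++ t ++ R) T) ∧
    TableOK A w (P ++ s) M' ∧ (∀ p, M p = true → M' p = true) ∧
    (r = .failure → ∀ p j, RunElem.call p j ∈ s → M' (p, j) = true ∨ RunElem.call p j ∈ P)

theorem PendOK.push {A : NFA Sigma S} {P : List (RunElem S)} {M : S × ℕ → Bool}
    {q q' : S} {i i' : ℕ} (h : PendOK A P M (q, i)) (hst : CStep A (q, i) (q', i')) :
    PendOK A (P ++ [.call q i]) M (q', i') := by
  intro p j hp
  rcases List.mem_append.1 hp with hp | hp
  · exact (h p j hp).imp_right fun h => h.tail hst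
  · simp only [List.mem_singleton, RunElem.call.injEq] at hp
    obtain ⟨rfl, rfl⟩ := hp
    exact Or.inr (.single hst)

theorem noMemo_push {P : List (RunElem S)} (hP : ∀ e ∈ P, memoToCall e = none) (q : S) (i : ℕ) :
    ∀ e ∈ P ++ [.call q i], memoToCall e = none := by
  intro e he
  rcases List.mem_append.1 he with he | he
  · exact hP e he
  · rw [List.mem_singleton.1 he]; rfl

/-- A call with exactly one recursive call. -/
theorem concl_one [DecidableEq S] {A : NFA Sigma S} {w : List Sigma} {P : List (RunElem S)}
    {q q' : S} {i i' : ℕ} {M M' : S × ℕ → Bool} {r : Result} {t : List (RunElem S)}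
    (hq : RunElem.call q i ∉ P)
    (hm : ∀ s, MatchRun A w q' i' r s → MatchRun A w q i r (.call q i :: s ++ [r.elem]))
    (h : Concl A w (P ++ [.call q i]) q' i' M M' r t) :
    Concl A w P q i M (recFail M' q i r) r (.call q i :: t ++ [r.elem]) := by
  obtain ⟨s, hs, hsub, htab, hmono, hpend⟩ := h
  refine ⟨_, hm s hs, ?_, ?_, fun p hp => recFail_mono _ _ _ _ _ (hmono p hp), ?_⟩
  · intro R T hT
    have := hsub ([r.elem] ++ R) T (by simpa using hT)
    simpa using this
  · refine tableOK_record ?_ hq (hm s hs)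
    have := htab.append [r.elem]
    simpa using this
  · rintro rfl p j hp
    by_cases hpj : (p, j) = (q, i)
    · left; simp [recFail, hpj]
    · simp [Result.elem] at hp hpj
      rcases hp with hp | hp
      · exact absurd hp.2 (hpj hp.1)
      · rcases hpend rfl p j hp with h | h
        · exact Or.inl (recFail_mono _ _ _ _ _ h)
        · simp at h
          rcases h with h | h
          · exact Or.inr h
          · exact absurd h.2 (hpj h.1)

theorem memo_main [DecidableEq S] (A : NFA Sigma S) (hLoop : A.NoEpsLoops) (w : List Sigma)
    {q : S} {i : ℕ} {M M' : S × ℕ → Bool} {r : Result} {t : List (RunElem S)}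
    (h : MemoRun A w q i M M' r t) :
    ∀ P : List (RunElem S), (∀ e ∈ P, memoToCall e = none) → TableOK A w P M →
      PendOK A P M (q, i) → Concl A w P q i M M' r t := by
  have key : ∀ {P : List (RunElem S)} {M : S × ℕ → Bool} {q : S} {i : ℕ},
      M (q, i) = false → PendOK A P M (q, i) → RunElem.call q i ∉ P := by
    intro P M q i hM hp hc
    rcases hp q i hc with h | h
    · simp [hM] at h
    · exact cstep_irrefl A hLoop _ h
  induction h with
  | @memoHit q i M hM =>
    intro P hP htab hpend
    obtain ⟨P1, s, P2, rfl, h1, h2⟩ := htab q i hM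
    refine ⟨s, h2, ?_, htab.append _, fun _ h => h, ?_⟩
    · intro R T hT
      obtain ⟨b, rfl, hb⟩ := matchRun_shape h2
      exact subStar_hit hb h1 hP hT
    · intro _ p j hp
      right
      simp [hp]
  | @accept q i M hM hF =>
    intro P hP htab hpend
    exact ⟨_, .accept hF, fun _ _ h => h, htab.append _, fun _ h => h, by simp⟩
  | @eps q q' i M M' r s hM hF hT _ ih =>
    intro P hP htab hpend
    have hst : CStep A (q, i) (q', i) := .eps ⟨hF, Or.inl hT⟩
    exact concl_one (key hM hpend) (fun s hs => .eps hF hT hs)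
      (ih _ (noMemo_push hP q i) (htab.append _) (hpend.push hst))
  | @branchSucc q q' q'' i i' M M' s hM hF hT _ ih =>
    intro P hP htab hpend
    have hst : CStep A (q, i) (q', i) := .eps ⟨hF, Or.inr (Or.inl ⟨_, hT⟩)⟩
    exact concl_one (key hM hpend) (fun s hs => .branchSucc hF hT hs)
      (ih _ (noMemo_push hP q i) (htab.append _) (hpend.push hst))
  | @branchFail q q' q'' i M M' M'' r t t' hM hF hT _ _ ih ih' =>
    intro P hP htab hpend
    have hst : CStep A (q, i) (q', i) := .eps ⟨hF, Or.inr (Or.inl ⟨_, hT⟩)⟩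
    have hst' : CStep A (q, i) (q'', i) := .eps ⟨hF, Or.inr (Or.inr ⟨_, hT⟩)⟩
    have hq := key hM hpend
    obtain ⟨s, hs, hsub, htab1, hmono, hpend1⟩ :=
      ih _ (noMemo_push hP q i) (htab.append _) (hpend.push hst)
    have hp2 : PendOK A (P ++ [.call q i] ++ s) M' (q'', i) := by
      have base : ∀ p j, RunElem.call p j ∈ P ++ [.call q i] →
          M' (p, j) = true ∨ Relation.TransGen (CStep A) (p, j) (q'', i) := fun p j hp =>
        (hpend.push hst' p j hp).imp_left (hmono _)
      intro p j hp
      rcases List.mem_append.1 hp with hp | hp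
      · exact base p j hp
      · rcases hpend1 rfl p j hp with h | h
        · exact Or.inl h
        · exact base p j h
    have hn2 : ∀ e ∈ P ++ [.call q i] ++ s, memoToCall e = none := by
      intro e he
      rcases List.mem_append.1 he with he | he
      · exact noMemo_push hP q i e he
      · exact bal_noMemo (matchRun_bal hs) e he
    obtain ⟨s', hs', hsub', htab2, hmono', hpend2⟩ := ih' _ hn2 htab1 hp2
    have hm := MatchRun.branchFail hF hT hs hs'
    refine ⟨_, hm, ?_, ?_, fun p hp => recFail_mono _ _ _ _ _ (hmono' p (hmono p hp)), ?_⟩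
    · intro R T hR
      have h1 := hsub' ([r.elem] ++ R) T (by simpa using hR)
      have h2 := hsub (t' ++ [r.elem] ++ R) T (by simpa using h1)
      simpa using h2
    · refine tableOK_record ?_ hq hm
      have := htab2.append [r.elem]
      simpa using this
    · rintro rfl p j hp
      by_cases hpj : (p, j) = (q, i)
      · left; simp [recFail, hpj]
      · have base : RunElem.call p j ∈ s →
            recFail M'' q i .failure (p, j) = true ∨ RunElem.call p j ∈ P := by
          intro hp
          rcases hpend1 rfl p j hp with h | h
          · exact Or.inl (recFail_mono _ _ _ _ _ (hmono' _ h))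
          · simp at h hpj
            rcases h with h | h
            · exact Or.inr h
            · exact absurd h.2 (hpj h.1)
        simp [Result.elem] at hp hpj
        rcases hp with hp | hp | hp
        · exact absurd hp.2 (hpj hp.1)
        · exact base hp
        · rcases hpend2 rfl p j hp with h | h
          · exact Or.inl (recFail_mono _ _ _ _ _ h)
          · simp at h
            rcases h with h | h | h
            · exact Or.inr h
            · exact absurd h.2 (hpj h.1)
            · exact base h
  | @charSucc q q' σ i M M' r s hM hF hT hw _ ih =>
    intro P hP htab hpend
    exact concl_one (key hM hpend) (fun s hs => .charSucc hF hT hw hs)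
      (ih _ (noMemo_push hP q i) (htab.append _) (hpend.push .char))
  | @charFail q q' σ i M hM hF hT hw =>
    intro P hP htab hpend
    refine ⟨_, .charFail hF hT hw, fun _ _ h => h,
      tableOK_record (htab.append _) (key hM hpend) (.charFail hF hT hw),
      fun p hp => recFail_mono _ _ _ _ _ hp, ?_⟩
    intro _ p j hp
    simp at hp
    left
    simp [recFail, hp]

/-- **Lemma 6** (run expansion relates `Memo` to `Match`): for every NFA `A` without
ε-loops, every input string `w`, and every position `i ∈ {0, …, |w|}`, if `s` is the
run of `Match_{A,w}(q0, i)` and `s'` is the run of `Memo^{M0}_{A,w}(q0, i)`, then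
`s = sub*(s')`. -/
theorem memo_run_expansion {Sigma S : Type} [Fintype S] [DecidableEq S]
    (A : NFA Sigma S) (hLoop : A.NoEpsLoops)
    (w : List Sigma) (i : ℕ) (hi : i ≤ w.length)
    {r : Result} {s : List (RunElem S)}
    (hmatch : MatchRun A w A.q0 i r s)
    {M' : S × ℕ → Bool} {r' : Result} {s' : List (RunElem S)}
    (hmemo : MemoRun A w A.q0 i (fun _ => false) M' r' s') :
    SubStar memoToCall RunElem.isRet s' s := by
  obtain ⟨s0, hs0, hsub, -, -, -⟩ := memo_main A hLoop w hmemo [] (by simp)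
    (by intro q i h; simp at h) (by intro q i h; simp at h)
  obtain ⟨-, rfl⟩ := matchRun_det hmatch hs0
  have := hsub [] s (by
    simp only [List.nil_append, List.append_nil]
    refine SubStar.done ?_
    rw [List.findIdx?_eq_none_iff]
    intro e he
    simp [bal_noMemo (matchRun_bal hs0) e he])
  simpa using this


end RegexMemo
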